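/- Let m ≥ 0, σ > 0 and K(y,λ) = exp(−(y/σ)(√(λ + m²/σ²) − m/σ)). Then for every λ > 0, ∫₀^∞ G(∞,y) (∂_y K(y,λ))² σ² dy = (1/4)(1 − (m/σ)(λ + m²/σ²)^{−1/2}), where G(∞,y) = (1/(2m))(1 − e^{−(2m/σ²)y}). -/

import Mathlib

open MeasureTheory Set Filter Topology

/-- For `m ≥ 0`, `σ > 0` and `K(y,λ) = exp(−(y/σ)(√(λ + m²/σ²) − m/σ))`, one has for `λ > 0`:
`∫₀^∞ G(∞,y)(∂_y K(y,λ))² σ² dy = (1/4)(1 − (m/σ)(λ + m²/σ²)^{−1/2})`, where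
`G(∞,y) = (1/(2m))(1 − e^{−(2m/σ²)y})` (interpreted as `y/σ²` when `m = 0`). -/
theorem multiplier_symbol_brownian_negative_drift
    (m σ lam : ℝ) (hm : 0 ≤ m) (hσ : 0 < σ) (hlam : 0 < lam)
    (K : ℝ → ℝ)
    (hK : ∀ y, K y = Real.exp (-(y/σ) * (Real.sqrt (lam + m^2/σ^2) - m/σ)))
    (Ginf : ℝ → ℝ)
    (hG : ∀ y, Ginf y =
      if m = 0 then y/σ^2 else 1/(2*m) * (1 - Real.exp (-(2*m/σ^2) * y))) :
    ∫ y in Set.Ioi (0:ℝ), Ginf y * (deriv K y)^2 * σ^2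
      = 1/4 * (1 - (m/σ) * (Real.sqrt (lam + m^2/σ^2))⁻¹) := by
  set s := Real.sqrt (lam + m^2/σ^2) with hs
  have hpos : 0 < lam + m^2/σ^2 := by positivity
  have hs0 : 0 < s := Real.sqrt_pos.mpr hpos
  have hmσ : 0 ≤ m/σ := by positivity
  have hc : 0 < s - m/σ := by
    have : m/σ < s := by
      apply Real.lt_sqrt_of_sq_lt
      rw [div_pow]; linarith
    linarith
  obtain ⟨c, hcd⟩ : ∃ c, c = s - m/σ := ⟨_, rfl⟩
  rw [← hcd] at hc hK
  have hd : ∀ y, deriv K y = Real.exp (-(y/σ) * c) * (-(1/σ) * c) := by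
    intro y
    have : K = fun y => Real.exp (-(y/σ) * c) := funext hK
    rw [this]
    exact ((((hasDerivAt_id y).div_const σ).neg.mul_const c).exp).deriv
  have hd2 : ∀ y, (deriv K y)^2 * σ^2 = c^2 * Real.exp (-(2*c/σ) * y) := by
    intro y
    have : Real.exp (-(2*c/σ) * y) = Real.exp (-(y/σ) * c) ^ 2 := by
      rw [← Real.exp_nat_mul]; congr 1; push_cast; ring
    rw [hd, this]; field_simp
  have hr : 0 < 2*c/σ := by positivity
  by_cases h0 : m = 0
  · have e : ∀ y ∈ Ioi (0:ℝ), Ginf y * (deriv K y)^2 * σ^2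
        = c^2/σ^2 * (y ^ ((2:ℝ)-1) * Real.exp (-(2*c/σ * y))) := by
      intro y _
      rw [mul_assoc, hd2, hG, if_pos h0, show (2:ℝ)-1 = 1 by norm_num, Real.rpow_one, neg_mul]
      ring
    rw [setIntegral_congr_fun measurableSet_Ioi e, integral_const_mul,
      Real.integral_rpow_mul_exp_neg_mul_Ioi (by norm_num) hr, Real.Gamma_two, h0, Real.rpow_two]
    field_simp
    ring
  · have hm0 : 0 < m := lt_of_le_of_ne hm (Ne.symm h0)
    have e : ∀ y ∈ Ioi (0:ℝ), Ginf y * (deriv K y)^2 * σ^2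
        = c^2/(2*m) * (Real.exp (-(2*c/σ) * y) - Real.exp (-(2*s/σ) * y)) := by
      intro y _
      have : Real.exp (-(2*s/σ) * y) = Real.exp (-(2*m/σ^2) * y) * Real.exp (-(2*c/σ) * y) := by
        rw [← Real.exp_add]; congr 1; rw [hcd]; field_simp; ring
      rw [mul_assoc, hd2, hG, if_neg h0, this]
      ring
    have h1 : -(2*c/σ) < 0 := by linarith
    have h2 : -(2*s/σ) < 0 := by
      have : 0 < 2*s/σ := by positivity
      linarith
    rw [setIntegral_congr_fun measurableSet_Ioi e, integral_const_mul,
      integral_sub (integrableOn_exp_mul_Ioi h1 0) (integrableOn_exp_mul_Ioi h2 0),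
      integral_exp_mul_Ioi h1, integral_exp_mul_Ioi h2]
    have hsc : s = c + m/σ := by linarith
    clear_value s
    simp only [mul_zero, Real.exp_zero]
    have hm' : m = σ * (s - c) := by rw [hsc]; field_simp; ring
    have hsc' : s - c ≠ 0 := by
      intro h; rw [h] at hm'; simp at hm'; exact h0 hm'
    rw [hm']
    field_simp
    ring
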